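/- Let G = (V,E) be a finite connected simple undirected non-bipartite graph with minimum degree at least 2 which is not a cycle (equivalently, |E| > |V|), with adjacency matrix A, and let T be the adjacency matrix of the oriented line graph of G (the Hashimoto matrix). Then the eigenspace of T for the eigenvalue -1, i.e. the space of vectors s on directed edges with T s = -s, has dimension exactly |E| - |V|. -/

import Mathlib

open Matrix Finset

namespace SimpleGraph

variable {V : Type*} (G : SimpleGraph V)

/-- On a connected non-bipartite graph, a function that changes sign along every edge is zero. -/
theorem eq_zero_of_adj_eq_neg {G : SimpleGraph V} (hconn : G.Connected)
    (hnonbip : ¬ ∃ X : Set V, ∀ ⦃u v : V⦄, G.Adj u v → (u ∈ X ↔ v ∉ X))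
    {f : V → ℝ} (hf : ∀ ⦃u v⦄, G.Adj u v → f u = -f v) : f = 0 := by
  by_contra hne
  obtain ⟨w, hw⟩ := Function.ne_iff.mp hne
  have hwalk : ∀ {a b : V}, G.Walk a b → f a ≠ 0 → f b ≠ 0 := by
    intro a b p
    induction p with
    | nil => exact id
    | cons h _ ih => exact fun ha => ih fun hb => ha (by rw [hf h, hb, neg_zero])
  have hall (v : V) : f v ≠ 0 := (hconn.preconnected w v).elim fun p => hwalk p hw
  refine hnonbip ⟨{v | 0 < f v}, fun u v h => ?_⟩
  have huv := hf h
  have hv := hall v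
  simp only [Set.mem_ofPred_eq, huv, not_lt, Left.neg_pos_iff]
  exact ⟨le_of_lt, fun h => lt_of_le_of_ne h hv⟩

/-- The undirected edge underlying a directed edge. -/
def toEdge (p : {p : V × V // G.Adj p.1 p.2}) : G.edgeSet :=
  ⟨s(p.1.1, p.1.2), p.2⟩

theorem toEdge_surjective : Function.Surjective G.toEdge := by
  rintro ⟨e, he⟩
  induction e with
  | h u v => exact ⟨⟨(u, v), he⟩, rfl⟩

variable [DecidableEq V]

/-- The vertex-edge incidence matrix, with columns indexed by the edges of the graph. -/
def edgeIncMatrix : Matrix V G.edgeSet ℝ :=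
  Matrix.of fun v e => if v ∈ e.1 then 1 else 0

variable [Fintype V]

theorem edgeIncMatrix_transpose_mulVec (f : V → ℝ) (p : {p : V × V // G.Adj p.1 p.2}) :
    (G.edgeIncMatrixᵀ *ᵥ f) (G.toEdge p) = f p.1.1 + f p.1.2 := by
  have hne : p.1.1 ≠ p.1.2 := p.2.ne
  have h : (univ.filter fun w => w = p.1.1 ∨ w = p.1.2) = {p.1.1, p.1.2} := by
    ext; simp
  simp only [mulVec, dotProduct, edgeIncMatrix, toEdge, transpose_apply, of_apply, Sym2.mem_iff,
    ite_mul, one_mul, zero_mul]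
  rw [← sum_filter, h, sum_pair hne]

variable [DecidableRel G.Adj]

theorem edgeIncMatrix_mulVec (t : G.edgeSet → ℝ) (v : V) :
    (G.edgeIncMatrix *ᵥ t) v =
      ∑ p : {p : V × V // G.Adj p.1 p.2} with p.1.1 = v, t (G.toEdge p) := by
  simp only [mulVec, dotProduct, edgeIncMatrix, of_apply, ite_mul, one_mul, zero_mul]
  rw [← sum_filter]
  symm
  refine sum_bij (fun p _ => G.toEdge p) ?_ ?_ ?_ fun _ _ => rfl
  · rintro ⟨⟨a, b⟩, h⟩ hp
    simp_all [toEdge]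
  · rintro ⟨⟨a, b⟩, h⟩ hp ⟨⟨c, d⟩, h'⟩ hp' heq
    simp_all [toEdge]
    grind
  · rintro ⟨e, he⟩ hv
    obtain ⟨x, rfl⟩ := Sym2.mem_iff_exists.mp (mem_filter.mp hv).2
    exact ⟨⟨(v, x), he⟩, by simp, rfl⟩

/-- The incidence matrix of a connected non-bipartite graph has full row rank. -/
theorem finrank_ker_edgeIncMatrix_add_card (hconn : G.Connected)
    (hnonbip : ¬ ∃ X : Set V, ∀ ⦃u v : V⦄, G.Adj u v → (u ∈ X ↔ v ∉ X)) :
    Module.finrank ℝ (LinearMap.ker G.edgeIncMatrix.mulVecLin) + Fintype.card V =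
      G.edgeFinset.card := by
  have hinj : Function.Injective G.edgeIncMatrixᵀ.mulVecLin := by
    rw [← LinearMap.ker_eq_bot, LinearMap.ker_eq_bot']
    intro f hf
    refine eq_zero_of_adj_eq_neg hconn hnonbip fun u v h => ?_
    have := G.edgeIncMatrix_transpose_mulVec f ⟨(u, v), h⟩
    rw [← mulVecLin_apply, hf, Pi.zero_apply] at this
    dsimp only at this
    linarith
  have hrank : G.edgeIncMatrix.rank = Fintype.card V := by
    rw [← rank_transpose, Matrix.rank, LinearMap.finrank_range_of_inj hinj,
      Module.finrank_fintype_fun_eq_card]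
  have := G.edgeIncMatrix.mulVecLin.finrank_range_add_finrank_ker
  rw [Module.finrank_fintype_fun_eq_card, ← Matrix.rank, hrank] at this
  rw [edgeFinset_card, ← this, add_comm]

/-- The action of the Hashimoto matrix: the sum of the values out of the head, less the value on
the reversed edge. -/
theorem hashimoto_mulVec {G : SimpleGraph V} [DecidableRel G.Adj]
    {T : Matrix {p : V × V // G.Adj p.1 p.2} {p : V × V // G.Adj p.1 p.2} ℝ}
    (hT : ∀ e f : {p : V × V // G.Adj p.1 p.2},
      T e f = if e.1.2 = f.1.1 ∧ e.1.1 ≠ f.1.2 then 1 else 0)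
    (s : {p : V × V // G.Adj p.1 p.2} → ℝ) {u v : V} (h : G.Adj u v) :
    (T *ᵥ s) ⟨(u, v), h⟩ =
      ∑ p : {p : V × V // G.Adj p.1 p.2} with p.1.1 = v, s p - s ⟨(v, u), h.symm⟩ := by
  simp only [mulVec, dotProduct, hT, ite_mul, one_mul, zero_mul]
  rw [← sum_filter, eq_sub_iff_add_eq, add_comm,
    ← add_sum_erase (univ.filter fun p : {p : V × V // G.Adj p.1 p.2} => p.1.1 = v) s
      (a := ⟨(v, u), h.symm⟩) (by simp)]
  congr 2
  ext ⟨⟨a, b⟩, hab⟩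
  simp only [mem_filter, mem_univ, true_and, mem_erase, ne_eq, Subtype.mk.injEq, Prod.mk.injEq]
  grind

/-- The `-1` eigenvectors of the Hashimoto matrix of a connected non-bipartite graph are the
symmetric extensions of the kernel of the incidence matrix. -/
theorem eigenspace_hashimoto_neg_one (hconn : G.Connected)
    (hnonbip : ¬ ∃ X : Set V, ∀ ⦃u v : V⦄, G.Adj u v → (u ∈ X ↔ v ∉ X))
    (T : Matrix {p : V × V // G.Adj p.1 p.2} {p : V × V // G.Adj p.1 p.2} ℝ)
    (hT : ∀ e f : {p : V × V // G.Adj p.1 p.2},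
      T e f = if e.1.2 = f.1.1 ∧ e.1.1 ≠ f.1.2 then 1 else 0) :
    Module.End.eigenspace (Matrix.toLin' T) (-1) =
      (LinearMap.ker G.edgeIncMatrix.mulVecLin).map (LinearMap.funLeft ℝ ℝ G.toEdge) := by
  ext s
  rw [Module.End.mem_eigenspace_iff, toLin'_apply, Submodule.mem_map]
  constructor
  · intro hs
    have key : ∀ ⦃u v⦄ (h : G.Adj u v),
        ∑ p : {p : V × V // G.Adj p.1 p.2} with p.1.1 = v, s p =
          s ⟨(v, u), h.symm⟩ - s ⟨(u, v), h⟩ := by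
      intro u v h
      have := hashimoto_mulVec hT s h
      rw [hs] at this
      simp only [Pi.smul_apply, smul_eq_mul] at this
      linarith
    have hzero := eq_zero_of_adj_eq_neg hconn hnonbip
      (f := fun v => ∑ p : {p : V × V // G.Adj p.1 p.2} with p.1.1 = v, s p)
      fun u v h => by rw [key h, key h.symm, neg_sub]
    have hsymm : ∀ ⦃u v⦄ (h : G.Adj u v), s ⟨(v, u), h.symm⟩ = s ⟨(u, v), h⟩ := by
      intro u v h
      have := (key h).symm.trans (congrFun hzero v)
      exact sub_eq_zero.mp this
    have hfactor : Function.FactorsThrough s G.toEdge := by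
      rintro ⟨⟨a, b⟩, h⟩ ⟨⟨c, d⟩, h'⟩ heq
      rcases Sym2.eq_iff.mp (Subtype.ext_iff.mp heq) with ⟨hac, hbd⟩ | ⟨had, hbc⟩
      · dsimp only at hac hbd
        subst hac hbd
        rfl
      · dsimp only at had hbc
        subst had hbc
        exact hsymm h'
    have hext (p) : Function.extend G.toEdge s 0 (G.toEdge p) = s p := hfactor.extend_apply 0 p
    refine ⟨Function.extend G.toEdge s 0, ?_, funext hext⟩
    rw [LinearMap.mem_ker, mulVecLin_apply]
    ext v
    simp only [edgeIncMatrix_mulVec, hext]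
    exact congrFun hzero v
  · rintro ⟨t, ht, rfl⟩
    rw [LinearMap.mem_ker, mulVecLin_apply] at ht
    ext ⟨⟨u, v⟩, h⟩
    have hv := congrFun ht v
    rw [edgeIncMatrix_mulVec, Pi.zero_apply] at hv
    have hswap : G.toEdge ⟨(v, u), h.symm⟩ = G.toEdge ⟨(u, v), h⟩ := Subtype.ext Sym2.eq_swap
    rw [hashimoto_mulVec hT]
    simp only [LinearMap.funLeft_apply, Pi.smul_apply, smul_eq_mul, hv, hswap]
    ring

end SimpleGraph

/-- Let `G = (V, E)` be a finite connected simple non-bipartite graph with minimum degree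
at least `2` which is not a cycle (equivalently `|E| > |V|`), and let `T` be the
Hashimoto matrix (adjacency matrix of the oriented line graph, indexed by directed
edges). Then the eigenspace of `T` for the eigenvalue `-1` has dimension exactly
`|E| - |V|` (stated additively to avoid natural subtraction). -/
theorem finrank_hashimoto_eigenspace_neg_one
    {V : Type*} [Fintype V] [DecidableEq V]
    (G : SimpleGraph V) [DecidableRel G.Adj]
    (hconn : G.Connected)
    (hdeg : ∀ v : V, 2 ≤ G.degree v)
    (hcard : Fintype.card V < G.edgeFinset.card)
    (hnonbip : ¬ ∃ X : Set V, ∀ ⦃u v : V⦄, G.Adj u v → (u ∈ X ↔ v ∉ X))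
    (T : Matrix {p : V × V // G.Adj p.1 p.2} {p : V × V // G.Adj p.1 p.2} ℝ)
    (hT : ∀ e f : {p : V × V // G.Adj p.1 p.2},
      T e f = if e.1.2 = f.1.1 ∧ e.1.1 ≠ f.1.2 then 1 else 0) :
    Module.finrank ℝ (Module.End.eigenspace (Matrix.toLin' T) (-1)) + Fintype.card V =
      G.edgeFinset.card := by
  rw [G.eigenspace_hashimoto_neg_one hconn hnonbip T hT,
    ← (Submodule.equivMapOfInjective _
      (LinearMap.funLeft_injective_of_surjective ℝ ℝ _ G.toEdge_surjective) _).finrank_eq,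
    G.finrank_ker_edgeIncMatrix_add_card hconn hnonbip]
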